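/- Let q = 2^m where m ≥ 3, let Tr denote the absolute trace map from GF(2^m) to GF(2), and let B₂ = {u ∈ GF(q) : Tr(u³ - u) = 1}. If m ≢ 0 (mod 4), then the setwise stabiliser of B₂ in GA_1(q) is the two-element group {id, x ↦ x + 1}. If m ≡ 0 (mod 4), then the setwise stabiliser of B₂ in GA_1(q) is the 12-element group {x ↦ ω^k·x + α_j·ω^{-k} : k ∈ {1, 2}, j ∈ {1, 2, 3, 4}} ∪ {id} ∪ {x ↦ x + ω^k : k ∈ {0, 1, 2}}, where ω is a primitive 3rd root of unity in GF(q) and α₁, α₂, α₃, α₄ are the four roots of x⁴ + x + 1 = 0 in GF(q). -/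

import Mathlib

/-!
Write `t` for the trace of `F` over `GF(2)`; it satisfies `t (x ^ 2) = t x` and `t (x * y)` is
nondegenerate. The map `x ↦ a * x + b` stabilises `B₂` iff `t ((a x + b)³ - (a x + b)) = t (x³ - x)`
for all `x`. Polarising this cubic identity gives `c y + c² y⁴ = 0` for all `y`, where `c = a³ + 1`;
taking `y = 1` forces `c = 0` or `c = 1`, and the latter would mean `a = 0`. Once `a³ = 1`, the
difference of the two sides is `t (a² (b⁴ + b + 1 + a) x²) + t (b³ + b)`, so the stabiliser is
described by `a³ = 1`, `b⁴ + b + 1 + a = 0` and `t (b³ + b) = 0` (`image_eq_iff`).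

It remains to solve these equations. For a primitive cube root of unity `ω`, `m` is even and
`t ω = m / 2` modulo two (`trace_omega`), which rules out every solution involving `ω` unless `4 ∣ m`. If `4 ∣ m`
and `a ≠ 1`, the equation for `b` says that `a * b` is a root of `x⁴ + x + 1`, and then the trace
condition is automatic (`trace_root`).
-/

namespace TraceCube

variable {F : Type*} [Field F] [Fintype F] [Algebra (ZMod 2) F]

lemma two_eq_zero : (2 : F) = 0 := by
  have : CharP F 2 := charP_of_injective_algebraMap (algebraMap (ZMod 2) F).injective 2
  exact CharTwo.two_eq_zero

lemma trace_sq (x : F) : Algebra.trace (ZMod 2) F (x ^ 2) = Algebra.trace (ZMod 2) F x := by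
  have h := Algebra.trace_eq_of_algEquiv (FiniteField.frobeniusAlgEquivOfAlgebraic (ZMod 2) F) x
  simpa [FiniteField.coe_frobeniusAlgEquivOfAlgebraic] using h

lemma eq_zero_of_trace_mul_sq (d : F)
    (h : ∀ x, Algebra.trace (ZMod 2) F (d * x ^ 2) = 0) : d = 0 := by
  have : CharP F 2 := charP_of_injective_algebraMap (algebraMap (ZMod 2) F).injective 2
  refine (traceForm_nondegenerate (ZMod 2) F).1 d fun z => ?_
  obtain ⟨x, rfl⟩ := (bijective_frobenius F 2).2 z
  exact h x

/-- The second difference of `u ↦ u³ - u` along `x ↦ a * x + b` in characteristic two. -/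
lemma second_difference (a b x y : F) :
    ((a * (x + y) + b) ^ 3 - (a * (x + y) + b)) + ((a * x + b) ^ 3 - (a * x + b))
      + ((a * y + b) ^ 3 - (a * y + b)) + ((a * 0 + b) ^ 3 - (a * 0 + b))
      = a ^ 3 * x ^ 2 * y + a ^ 3 * x * y ^ 2 := by
  have h2 := two_eq_zero (F := F)
  grind

/-- Once `a³ = 1`, the substitution `x ↦ a * x + b` changes `t (x³ - x)` by an additive form in `x`
and a constant. -/
lemma trace_comp (a b : F) (ha : a ^ 3 = 1) (x : F) :
    Algebra.trace (ZMod 2) F ((a * x + b) ^ 3 - (a * x + b)) =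
      Algebra.trace (ZMod 2) F (x ^ 3 - x)
        + Algebra.trace (ZMod 2) F (a ^ 2 * (b ^ 4 + b + 1 + a) * x ^ 2)
        + Algebra.trace (ZMod 2) F (b ^ 3 + b) := by
  have h2 := two_eq_zero (F := F)
  have e1 : (a * x + b) ^ 3 - (a * x + b)
      = (x ^ 3 - x) + (b ^ 3 + b) + (a ^ 2 * b * x ^ 2 + (a * b ^ 2 * x + a * x + x)) := by
    grind
  have e2 : a ^ 2 * (b ^ 4 + b + 1 + a) * x ^ 2
      = a ^ 2 * b * x ^ 2 + (a * b ^ 2 * x + a * x + x) ^ 2 := by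
    grind
  rw [e1, e2, map_add, map_add _ (x ^ 3 - x), map_add _ (a ^ 2 * b * x ^ 2),
    map_add _ (a ^ 2 * b * x ^ 2), trace_sq]
  ring

lemma image_iff_trace (a b : F) (ha : a ≠ 0) :
    (fun x => a * x + b) '' {u : F | Algebra.trace (ZMod 2) F (u ^ 3 - u) = 1}
        = {u : F | Algebra.trace (ZMod 2) F (u ^ 3 - u) = 1} ↔
      ∀ x, Algebra.trace (ZMod 2) F ((a * x + b) ^ 3 - (a * x + b))
        = Algebra.trace (ZMod 2) F (x ^ 3 - x) := by
  have hz : ∀ y z : ZMod 2, (y = 1 ↔ z = 1) → y = z := by decide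
  constructor
  · intro h x
    apply hz
    constructor
    · intro hx
      have hx' : a * x + b ∈ {u : F | Algebra.trace (ZMod 2) F (u ^ 3 - u) = 1} := hx
      rw [← h] at hx'
      obtain ⟨y, hy, hyx⟩ := hx'
      have : y = x := mul_left_cancel₀ ha (add_right_cancel hyx)
      exact this ▸ hy
    · intro hx
      have hx' := Set.mem_image_of_mem (fun x => a * x + b)
        (show x ∈ {u : F | Algebra.trace (ZMod 2) F (u ^ 3 - u) = 1} from hx)
      rw [h] at hx'
      exact hx'
  · intro h
    ext u
    constructor
    · rintro ⟨x, hx, rfl⟩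
      exact (h x).trans hx
    · intro hu
      have e : a * (a⁻¹ * (u - b)) + b = u := by field_simp; ring
      refine ⟨a⁻¹ * (u - b), ?_, e⟩
      have := h (a⁻¹ * (u - b))
      rw [e] at this
      exact this.symm.trans hu

/-- Polarising the invariance of `t (x³ - x)` shows that `a` is a cube root of unity. -/
lemma cube_eq_one (a b : F) (ha : a ≠ 0)
    (h : ∀ x, Algebra.trace (ZMod 2) F ((a * x + b) ^ 3 - (a * x + b))
        = Algebra.trace (ZMod 2) F (x ^ 3 - x)) : a ^ 3 = 1 := by
  have h2 := two_eq_zero (F := F)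
  have key : (a ^ 3 + 1) + (a ^ 3 + 1) ^ 2 = 0 := by
    apply eq_zero_of_trace_mul_sq
    intro x
    have p := congrArg (Algebra.trace (ZMod 2) F) (second_difference a b x 1)
    have q := congrArg (Algebra.trace (ZMod 2) F) (second_difference 1 0 x 1)
    rw [map_add, map_add, map_add, h, h, h, h] at p
    simp only [one_mul, add_zero, mul_one, one_pow] at q p
    rw [map_add, map_add, map_add] at q
    rw [q] at p
    have e : ((a ^ 3 + 1) + (a ^ 3 + 1) ^ 2) * x ^ 2
        = (a ^ 3 * x ^ 2 + x ^ 2) + ((a ^ 3 + 1) * x) ^ 2 := by ring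
    rw [e, map_add, trace_sq, ← map_add]
    have e' : a ^ 3 * x ^ 2 + x ^ 2 + (a ^ 3 + 1) * x
        = (x ^ 2 + x) + (a ^ 3 * x ^ 2 + a ^ 3 * x) := by ring
    rw [e', map_add, ← p]
    exact CharTwo.add_self_eq_zero _
  -- The left side of `key` is `(a³ + 1) * a³` in characteristic two.
  have : a ^ 3 * (a ^ 3 - 1) = 0 := by grind
  rcases mul_eq_zero.1 this with h0 | h0
  · exact absurd (pow_eq_zero_iff (by norm_num) |>.1 h0) ha
  · exact sub_eq_zero.1 h0

/-- The equations cutting out the stabiliser. -/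
lemma image_eq_iff (a b : F) (ha : a ≠ 0) :
    (fun x => a * x + b) '' {u : F | Algebra.trace (ZMod 2) F (u ^ 3 - u) = 1}
        = {u : F | Algebra.trace (ZMod 2) F (u ^ 3 - u) = 1} ↔
      a ^ 3 = 1 ∧ b ^ 4 + b + 1 + a = 0 ∧ Algebra.trace (ZMod 2) F (b ^ 3 + b) = 0 := by
  rw [image_iff_trace a b ha]
  constructor
  · intro h
    have h3 := cube_eq_one a b ha h
    have hb : Algebra.trace (ZMod 2) F (b ^ 3 + b) = 0 := by
      have := trace_comp a b h3 0
      rw [h 0] at this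
      simpa using this.symm
    refine ⟨h3, ?_, hb⟩
    have hd : a ^ 2 * (b ^ 4 + b + 1 + a) = 0 := by
      apply eq_zero_of_trace_mul_sq
      intro x
      have := trace_comp a b h3 x
      rw [h x, hb] at this
      simpa using this
    exact (mul_eq_zero.1 hd).resolve_left (pow_ne_zero 2 ha)
  · rintro ⟨h3, hd, hb⟩ x
    rw [trace_comp a b h3 x, hd, hb]
    simp

/-- A primitive cube root of unity exists only for even `m`, and its trace is then `m / 2`
modulo two. -/
lemma trace_omega {m : ℕ} (hcard : Fintype.card F = 2 ^ m) (w : F) (hw : w ^ 2 + w + 1 = 0) :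
    m % 2 = 0 ∧ (Algebra.trace (ZMod 2) F w = 0 ↔ m % 4 = 0) := by
  have h2 := two_eq_zero (F := F)
  have : CharP F 2 := charP_of_injective_algebraMap (algebraMap (ZMod 2) F).injective 2
  have hp : ∀ n, w ^ 2 ^ (2 * n) = w := by
    intro n
    induction n with
    | zero => simp
    | succ n ih =>
      rw [show 2 ^ (2 * (n + 1)) = 2 ^ (2 * n) * 4 by ring, pow_mul, ih]
      grind
  have hq : ∀ n, w ^ 2 ^ (2 * n + 1) = w + 1 := by
    intro n
    rw [pow_succ, pow_mul, hp]
    grind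
  have hs : ∀ n, ∑ i ∈ Finset.range (2 * n), w ^ 2 ^ i = (n : F) := by
    intro n
    induction n with
    | zero => simp
    | succ n ih =>
      rw [show 2 * (n + 1) = 2 * n + 1 + 1 by ring, Finset.sum_range_succ, Finset.sum_range_succ,
        ih, hp, hq]
      push_cast
      grind
  have heven : m % 2 = 0 := by
    by_contra hodd
    have hf := FiniteField.pow_card w
    rw [hcard, show m = 2 * (m / 2) + 1 by omega, hq] at hf
    simp at hf
  refine ⟨heven, ?_⟩
  have hfin : Module.finrank (ZMod 2) F = m := by
    have := Module.card_eq_pow_finrank (K := ZMod 2) (V := F)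
    rw [hcard, ZMod.card] at this
    exact (Nat.pow_right_injective le_rfl this).symm
  have ht := FiniteField.algebraMap_trace_eq_sum_pow (ZMod 2) F w
  rw [hfin, Nat.card_zmod, show m = 2 * (m / 2) by omega, hs] at ht
  rw [← map_eq_zero_iff (algebraMap (ZMod 2) F) (algebraMap (ZMod 2) F).injective, ht,
    CharP.cast_eq_zero_iff F 2]
  omega

/-- If `a` is a primitive cube root of unity and `x⁴ + x + 1` vanishes at `r`, then `b = r * a⁻¹ = r * a²`
meets the trace condition. Indeed `r² + r` is `a` or `a²`, so that `r³ + r * a²` is `r² + r` or `r²`;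
the latter equals `(r³)² + r³`, so that both have trace zero. -/
lemma trace_root (a r : F) (ha : a ^ 2 + a + 1 = 0) (hr : r ^ 4 + r + 1 = 0) :
    Algebra.trace (ZMod 2) F ((r * a ^ 2) ^ 3 + r * a ^ 2) = 0 := by
  have h2 := two_eq_zero (F := F)
  have hsplit : (r ^ 2 + r - a) * (r ^ 2 + r - a ^ 2) = 0 := by grind
  rcases mul_eq_zero.1 hsplit with h | h
  · have e : (r * a ^ 2) ^ 3 + r * a ^ 2 = r ^ 2 + r := by grind
    rw [e, map_add, trace_sq]
    exact CharTwo.add_self_eq_zero _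
  · have e : (r * a ^ 2) ^ 3 + r * a ^ 2 = (r ^ 3) ^ 2 + r ^ 3 := by grind
    rw [e, map_add, trace_sq]
    exact CharTwo.add_self_eq_zero _

/-- Four distinct roots of `x⁴ + x + 1` are all of its roots. -/
lemma exists_eq_root (α : Fin 4 → F) (hinj : Function.Injective α)
    (hα : ∀ j, α j ^ 4 + α j + 1 = 0) (r : F) (hr : r ^ 4 + r + 1 = 0) : ∃ j, r = α j := by
  classical
  by_contra! hne
  let p : Polynomial F := Polynomial.X ^ 4 + Polynomial.X + 1
  have hdeg : p.natDegree = 4 := by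
    simp only [p]
    compute_degree!
  have hp0 : p ≠ 0 := by
    intro h
    simp [h] at hdeg
  have hsub : insert r (Finset.univ.image α) ⊆ p.roots.toFinset := by
    intro x hx
    rw [Multiset.mem_toFinset, Polynomial.mem_roots hp0]
    rcases Finset.mem_insert.1 hx with rfl | hx
    · simpa [p, Polynomial.IsRoot] using hr
    · obtain ⟨j, -, rfl⟩ := Finset.mem_image.1 hx
      simpa [p, Polynomial.IsRoot] using hα j
  have h1 := Finset.card_le_card hsub
  rw [Finset.card_insert_of_notMem (by simpa using fun j h => hne j h.symm),
    Finset.card_image_of_injective _ hinj, Finset.card_univ, Fintype.card_fin] at h1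
  have h3 := p.roots.toFinset_card_le
  have h4 := p.card_roots'
  omega

end TraceCube


/-- For `q = 2^m`, `m ≥ 3`, and `B₂ = {u ∈ GF(q) : Tr(u³ - u) = 1}`: if
`m ≢ 0 (mod 4)`, the setwise stabiliser of `B₂` in `GA₁(q)` is
`{id, x ↦ x + 1}`; if `m ≡ 0 (mod 4)`, it is the 12-element group
`{x ↦ ω^k·x + α_j·ω^{-k} : k ∈ {1,2}, j ∈ {1,2,3,4}} ∪ {id} ∪
{x ↦ x + ω^k : k ∈ {0,1,2}}`, where `ω` is a primitive 3rd root of unity and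
`α₁, …, α₄` are the four roots of `x⁴ + x + 1` in `GF(q)`. -/
theorem ga1_stabiliser_of_trace_cube_sub_self_eq_one
    (F : Type*) [Field F] [Fintype F] [Algebra (ZMod 2) F]
    (m : ℕ) (hm : 3 ≤ m) (hcard : Fintype.card F = 2 ^ m)
    (B₂ : Set F) (hB₂ : B₂ = {u : F | Algebra.trace (ZMod 2) F (u ^ 3 - u) = 1})
    (a b : F) (ha : a ≠ 0) :
    (m % 4 ≠ 0 →
      ((fun x => a * x + b) '' B₂ = B₂ ↔ (a = 1 ∧ (b = 0 ∨ b = 1)))) ∧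
    (m % 4 = 0 → ∀ ω : F, ω ^ 3 = 1 → ω ≠ 1 →
      ∀ α : Fin 4 → F, Function.Injective α → (∀ j, α j ^ 4 + α j + 1 = 0) →
      ((fun x => a * x + b) '' B₂ = B₂ ↔
        ((a = 1 ∧ b ∈ ({0, 1, ω, ω ^ 2} : Set F)) ∨
         (∃ k ∈ ({1, 2} : Set ℕ), ∃ j : Fin 4,
            a = ω ^ k ∧ b = α j * (ω ^ k)⁻¹)))) := by
  subst hB₂
  rw [TraceCube.image_eq_iff a b ha]
  have h2 := TraceCube.two_eq_zero (F := F)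
  have quad : ∀ w : F, w ^ 3 = 1 → w ≠ 1 → w ^ 2 + w + 1 = 0 := by
    intro w hw hw1
    have : (w - 1) * (w ^ 2 + w + 1) = 0 := by grind
    exact (mul_eq_zero.1 this).resolve_left (sub_ne_zero.2 hw1)
  have tr2 : ∀ x : F, Algebra.trace (ZMod 2) F (x + x ^ 2) = 0 := by
    intro x
    rw [map_add, TraceCube.trace_sq]
    exact CharTwo.add_self_eq_zero _
  -- The element `w³ + w = w²` has the trace of `w`.
  have trw : ∀ w : F, w ^ 2 + w + 1 = 0 →
      Algebra.trace (ZMod 2) F (w ^ 3 + w) = Algebra.trace (ZMod 2) F w := by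
    intro w hw
    have e : w ^ 3 + w = w ^ 2 := by grind
    rw [e, TraceCube.trace_sq]
  -- For `a = 1` the equation for `b` says that `b` lies in the subfield of order four.
  have cases1 : a = 1 → b ^ 4 + b + 1 + a = 0 → b = 0 ∨ b = 1 ∨ b ^ 2 + b + 1 = 0 := by
    intro h1 hb
    have : b * ((b - 1) * (b ^ 2 + b + 1)) = 0 := by grind
    rcases mul_eq_zero.1 this with h | h
    · exact Or.inl h
    · rcases mul_eq_zero.1 h with h | h
      · exact Or.inr (Or.inl (sub_eq_zero.1 h))
      · exact Or.inr (Or.inr h)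
  have small : b = 0 ∨ b = 1 → Algebra.trace (ZMod 2) F (b ^ 3 + b) = 0 := by
    rintro (rfl | rfl)
    · simp
    · simpa using tr2 1
  refine ⟨fun hm4 => ⟨?_, ?_⟩, fun hm4 ω hω hω1 α hinj hα => ⟨?_, ?_⟩⟩
  · rintro ⟨h3, hb, ht⟩
    by_cases h1 : a = 1
    · refine ⟨h1, ?_⟩
      rcases cases1 h1 hb with h | h | h
      · exact Or.inl h
      · exact Or.inr h
      · rw [trw b h] at ht
        exact absurd ((TraceCube.trace_omega hcard b h).2.1 ht) hm4
    · -- Here `b⁴ + b = a + 1 = a²`, while the trace of `b⁴ + b` vanishes.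
      exfalso
      have ha2 := quad a h3 h1
      apply hm4
      refine (TraceCube.trace_omega hcard a ha2).2.1 ?_
      have e : a ^ 2 = (b + b ^ 2) + (b ^ 2 + (b ^ 2) ^ 2) := by grind
      rw [← TraceCube.trace_sq, e, map_add, tr2, tr2, add_zero]
  · rintro ⟨rfl, hb⟩
    refine ⟨by simp, ?_, small hb⟩
    rcases hb with rfl | rfl <;> grind
  · rintro ⟨h3, hb, ht⟩
    have hω2 := quad ω hω hω1
    by_cases h1 : a = 1
    · refine Or.inl ⟨h1, ?_⟩
      simp only [Set.mem_insert_iff, Set.mem_singleton_iff]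
      rcases cases1 h1 hb with h | h | h
      · exact Or.inl h
      · exact Or.inr (Or.inl h)
      · have : (b - ω) * (b - ω ^ 2) = 0 := by grind
        rcases mul_eq_zero.1 this with h | h
        · exact Or.inr (Or.inr (Or.inl (sub_eq_zero.1 h)))
        · exact Or.inr (Or.inr (Or.inr (sub_eq_zero.1 h)))
    · right
      have ha2 := quad a h3 h1
      obtain ⟨j, hj⟩ := TraceCube.exists_eq_root α hinj hα (b * a) (by grind)
      have hbj : b = α j * a⁻¹ := by
        rw [← hj]
        field_simp
      have : (a - ω) * (a - ω ^ 2) = 0 := by grind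
      rcases mul_eq_zero.1 this with h | h
      · have h' := sub_eq_zero.1 h
        refine ⟨1, by simp, j, by simpa using h', ?_⟩
        rw [pow_one, ← h']
        exact hbj
      · have h' := sub_eq_zero.1 h
        refine ⟨2, by simp, j, h', ?_⟩
        rw [← h']
        exact hbj
  · have hω2 := quad ω hω hω1
    rintro (⟨rfl, hb⟩ | ⟨k, hk, j, hak, hbj⟩)
    · simp only [Set.mem_insert_iff, Set.mem_singleton_iff] at hb
      have hb' : (b = 0 ∨ b = 1) ∨ b ^ 2 + b + 1 = 0 := by
        rcases hb with h | h | h | h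
        · exact Or.inl (Or.inl h)
        · exact Or.inl (Or.inr h)
        · right; grind
        · right; grind
      rcases hb' with h | h
      · refine ⟨by simp, ?_, small h⟩
        rcases h with rfl | rfl <;> grind
      · refine ⟨by simp, by grind, ?_⟩
        rw [trw b h]
        exact (TraceCube.trace_omega hcard b h).2.2 hm4
    · have ha2 : a ^ 2 + a + 1 = 0 := by
        rcases hk with rfl | hk
        · rw [hak]; grind
        · rw [Set.mem_singleton_iff] at hk
          subst hk
          rw [hak]; grind
      have h3 : a ^ 3 = 1 := by grind
      rw [← hak] at hbj
      have hinv : a⁻¹ = a ^ 2 := inv_eq_of_mul_eq_one_right (by rw [← h3]; ring)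
      rw [hinv] at hbj
      have hr := hα j
      refine ⟨h3, by grind, ?_⟩
      rw [hbj]
      exact TraceCube.trace_root a (α j) ha2 hr
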